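/- Let n ≥ 2 and let 𝓗^{>0} denote the set of n×n matrices of the form L·R where L = T₁(u)·T₂(u)⋯T_{n−1}(u) for some triangular array u = (u_i^j)_{1≤i≤j≤n−1} with all u_i^j > 0 and R ∈ 𝓑^{>0}. Then every X ∈ 𝓗^{>0} has all leading principal minors positive and admits an LU factorization X = L·R with L and R of the stated forms; the discrete full Kostant–Toda map X = L·R ↦ R·L is therefore defined on all of 𝓗^{>0}, and it maps 𝓗^{>0} into itself. Consequently, for any X(0) ∈ 𝓗^{>0}, all forward iterates X(t), t ∈ ℕ, are defined and lie in 𝓗^{>0}. -/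

import Mathlib

/-!
The map `L·R ↦ R·L` preserves `𝓗^{>0}` because a matrix of `𝓑^{>0}` can be moved to the right
past one elementary factor at a time. If `R` has diagonal `r` (indexed from `0`), then
`R · ℓ_{k+1}(a) = ℓ_{k+1}(a') · R'`
with `a' = a r_{k+1} / (r_k + a)`, where `R'` is again bidiagonal with unit superdiagonal and its
diagonal differs from `r` only in `r'_k = r_k + a` and `r'_{k+1} = r_k r_{k+1} / (r_k + a)`
(`bidiag_mul_elemL`). No subtraction occurs, so positivity persists, and the word of indices is
unchanged. Applying this to the factors of each `T_i`, and then to the `T_i` themselves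
(`exists_commute_prod`, used twice), gives `R · L(u) = L(v) · R'` with `v` positive.

The leading minors of `L·R` are those of `R`, since `L` is lower unipotent; they are products of
positive diagonal entries.
-/

open Matrix

/-- `ℓ_{k+1}(a)` (paper's 1-indexed `ℓ_i` with `i = k+1`): the identity matrix with
the entry `a` inserted in (0-indexed) position `(k+1, k)`. -/
def elemL (n : ℕ) (k : ℕ) (a : ℝ) : Matrix (Fin n) (Fin n) ℝ :=
  fun p q => (if p = q then 1 else 0) + (if (p : ℕ) = k + 1 ∧ (q : ℕ) = k then a else 0)

/-- `T_i(u) = ℓ₁(u_1^i)·ℓ₂(u_2^{i+1})⋯ℓ_{n−i}(u_{n−i}^{n−1})`. -/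
def Tmat (n : ℕ) (u : ℕ → ℕ → ℝ) (i : ℕ) : Matrix (Fin n) (Fin n) ℝ :=
  ((List.range (n - i)).map (fun j => elemL n j (u (j + 1) (i + j)))).prod

/-- `L(u) = T₁(u)·T₂(u)⋯T_{n−1}(u)`. -/
def Lmat (n : ℕ) (u : ℕ → ℕ → ℝ) : Matrix (Fin n) (Fin n) ℝ :=
  ((List.range (n - 1)).map (fun i => Tmat n u (i + 1))).prod

/-- The triangular array `u` is positive on the index range `1 ≤ i ≤ j ≤ n−1`. -/
def PosTriangle (n : ℕ) (u : ℕ → ℕ → ℝ) : Prop :=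
  ∀ i j, 1 ≤ i → i ≤ j → j ≤ n - 1 → 0 < u i j

/-- Upper bidiagonal matrices with ones on the superdiagonal (the set `𝓑`). -/
def IsUpperBidiagOne {n : ℕ} (M : Matrix (Fin n) (Fin n) ℝ) : Prop :=
  (∀ p q : Fin n, (p : ℕ) + 1 = (q : ℕ) → M p q = 1) ∧
  (∀ p q : Fin n, (p : ℕ) ≠ (q : ℕ) → (p : ℕ) + 1 ≠ (q : ℕ) → M p q = 0)

/-- Members of `𝓑^{>0}`. -/
def IsBpos {n : ℕ} (M : Matrix (Fin n) (Fin n) ℝ) : Prop :=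
  IsUpperBidiagOne M ∧ ∀ p : Fin n, 0 < M p p

/-- The totally positive Hessenberg matrices `𝓗^{>0} = N₋^{>0} × 𝓑^{>0}`. -/
def Hpos (n : ℕ) : Set (Matrix (Fin n) (Fin n) ℝ) :=
  {X | ∃ (u : ℕ → ℕ → ℝ) (R : Matrix (Fin n) (Fin n) ℝ),
    PosTriangle n u ∧ IsBpos R ∧ X = Lmat n u * R}

/-- The `k`-th leading principal minor of `M` (`= 1` for `k = 0`; junk value `0` for `k > n`). -/
noncomputable def leadMinor {n : ℕ} (M : Matrix (Fin n) (Fin n) ℝ) (k : ℕ) : ℝ :=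
  if h : k ≤ n then (M.submatrix (Fin.castLE h) (Fin.castLE h)).det else 0

/-- The upper bidiagonal matrix with diagonal `r` and ones on the superdiagonal. -/
def bidiag (n : ℕ) (r : ℕ → ℝ) : Matrix (Fin n) (Fin n) ℝ :=
  fun p q => if (p : ℕ) = q then r p else if (p : ℕ) + 1 = q then 1 else 0

lemma isBpos_bidiag {n : ℕ} {r : ℕ → ℝ} (hr : ∀ i < n, 0 < r i) : IsBpos (bidiag n r) := by
  refine ⟨⟨fun p q h => ?_, fun p q h1 h2 => ?_⟩, fun p => ?_⟩
  · have : (p : ℕ) ≠ q := by omega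
    simp [bidiag, h, this]
  · simp [bidiag, h1, h2]
  · simpa [bidiag] using hr p p.2

lemma IsBpos.exists_eq_bidiag {n : ℕ} {R : Matrix (Fin n) (Fin n) ℝ} (h : IsBpos R) :
    ∃ r : ℕ → ℝ, (∀ i < n, 0 < r i) ∧ R = bidiag n r := by
  refine ⟨fun i => if hi : i < n then R ⟨i, hi⟩ ⟨i, hi⟩ else 0, fun i hi => ?_, ?_⟩
  · simpa [hi] using h.2 ⟨i, hi⟩
  · ext p q
    by_cases h1 : (p : ℕ) = q
    · obtain rfl : p = q := Fin.ext h1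
      simp [bidiag]
    · by_cases h2 : (p : ℕ) + 1 = q
      · simp [bidiag, h1, h2, h.1.1 p q h2]
      · simp [bidiag, h1, h2, h.1.2 p q h1 h2]

lemma mul_elemL_apply {n k : ℕ} (hk : k + 1 < n) (a : ℝ) (M : Matrix (Fin n) (Fin n) ℝ)
    (p q : Fin n) :
    (M * elemL n k a) p q = M p q + if (q : ℕ) = k then M p ⟨k + 1, hk⟩ * a else 0 := by
  have h : ∀ j : Fin n, (j : ℕ) = k + 1 ↔ j = ⟨k + 1, hk⟩ := fun j => by simp [Fin.ext_iff]
  simp only [Matrix.mul_apply, elemL, mul_add, Finset.sum_add_distrib, h]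
  by_cases hq : (q : ℕ) = k <;> simp [hq]

lemma elemL_mul_apply {n k : ℕ} (hk : k + 1 < n) (a : ℝ) (M : Matrix (Fin n) (Fin n) ℝ)
    (p q : Fin n) :
    (elemL n k a * M) p q =
      M p q + if (p : ℕ) = k + 1 then a * M ⟨k, by omega⟩ q else 0 := by
  have h : ∀ j : Fin n, (j : ℕ) = k ↔ j = ⟨k, by omega⟩ := fun j => by simp [Fin.ext_iff]
  simp only [Matrix.mul_apply, elemL, add_mul, Finset.sum_add_distrib, h]
  by_cases hp : (p : ℕ) = k + 1 <;> simp [hp]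

/-- The exchange relation moving a bidiagonal matrix past one elementary factor. -/
lemma bidiag_mul_elemL {n k : ℕ} (hk : k + 1 < n) (r : ℕ → ℝ) (a : ℝ) (h : r k + a ≠ 0) :
    bidiag n r * elemL n k a = elemL n k (a * r (k + 1) / (r k + a)) *
      bidiag n (fun i => if i = k then r k + a
        else if i = k + 1 then r k * r (k + 1) / (r k + a) else r i) := by
  ext p q
  rw [mul_elemL_apply hk, elemL_mul_apply hk]
  simp only [bidiag]
  by_cases hpk : (p : ℕ) = k
  · by_cases hqk : (q : ℕ) = k
    · simp [hpk, hqk]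
    · simp [hpk, hqk, Ne.symm hqk]
  by_cases hp : (p : ℕ) = k + 1
  · by_cases hqk : (q : ℕ) = k
    · simp only [hp, hqk]
      simp
      field_simp
    · by_cases hq : (q : ℕ) = k + 1
      · simp only [hp, hq]
        simp
        field_simp
      · have h1 : k ≠ q := fun h => hqk h.symm
        have h2 : k + 1 ≠ q := fun h => hq h.symm
        simp [hp, hqk, h1, h2]
  · by_cases hqk : (q : ℕ) = k <;> simp [hp, hpk, hqk]

lemma exists_commute_elemL {n k : ℕ} (hk : k + 1 < n) {a : ℝ} (ha : 0 < a)
    {R : Matrix (Fin n) (Fin n) ℝ} (hR : IsBpos R) :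
    ∃ (b : ℝ) (R' : Matrix (Fin n) (Fin n) ℝ),
      0 < b ∧ IsBpos R' ∧ R * elemL n k a = elemL n k b * R' := by
  obtain ⟨r, hr, rfl⟩ := hR.exists_eq_bidiag
  have h0 := hr k (by omega)
  have h1 := hr (k + 1) hk
  refine ⟨_, _, ?_, isBpos_bidiag ?_, bidiag_mul_elemL hk r a (by positivity)⟩
  · positivity
  · intro i hi
    have := hr i hi
    split_ifs <;> positivity

/-- If matrices of `𝓑^{>0}` can be moved past each factor `f i b` with admissible parameter `b`
(keeping the parameter admissible), then they can be moved past a product of such factors. -/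
lemma exists_commute_prod {n : ℕ} {β : Type} (f : ℕ → β → Matrix (Fin n) (Fin n) ℝ)
    (P : ℕ → β → Prop) (m : ℕ)
    (hf : ∀ i < m, ∀ b, P i b → ∀ R, IsBpos R →
      ∃ b' R', P i b' ∧ IsBpos R' ∧ R * f i b = f i b' * R')
    (c : ℕ → β) (hc : ∀ i < m, P i (c i)) (R : Matrix (Fin n) (Fin n) ℝ) (hR : IsBpos R) :
    ∃ (d : ℕ → β) (R' : Matrix (Fin n) (Fin n) ℝ), (∀ i < m, P i (d i)) ∧ IsBpos R' ∧
      R * ((List.range m).map (fun i => f i (c i))).prod =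
        ((List.range m).map (fun i => f i (d i))).prod * R' := by
  induction m with
  | zero => exact ⟨c, R, by simp, hR, by simp⟩
  | succ m ih =>
    obtain ⟨d, R₁, hd, hR₁, h₁⟩ := ih (fun i hi => hf i (by omega)) (fun i hi => hc i (by omega))
    obtain ⟨b, R₂, hb, hR₂, h₂⟩ := hf m (by omega) (c m) (hc m (by omega)) R₁ hR₁
    refine ⟨Function.update d m b, R₂, fun i hi => ?_, hR₂, ?_⟩
    · rcases eq_or_ne i m with rfl | h
      · simpa using hb
      · simpa [h] using hd i (by omega)
    · have h3 : (List.range m).map (fun i => f i (Function.update d m b i)) =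
          (List.range m).map (fun i => f i (d i)) := by
        refine List.map_congr_left fun i hi => ?_
        have : i ≠ m := (List.mem_range.1 hi).ne
        simp [this]
      simp only [List.range_succ, List.map_append, List.prod_append, List.map_cons, List.map_nil,
        List.prod_cons, List.prod_nil, mul_one, h3, Function.update_self]
      rw [← mul_assoc, h₁, mul_assoc, h₂, mul_assoc]

lemma exists_commute_Lmat {n : ℕ} {u : ℕ → ℕ → ℝ} (hu : PosTriangle n u)
    {R : Matrix (Fin n) (Fin n) ℝ} (hR : IsBpos R) :
    ∃ (v : ℕ → ℕ → ℝ) (R' : Matrix (Fin n) (Fin n) ℝ),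
      PosTriangle n v ∧ IsBpos R' ∧ R * Lmat n u = Lmat n v * R' := by
  obtain ⟨d, R', hd, hR', h⟩ := exists_commute_prod
    (fun i (b : ℕ → ℝ) => ((List.range (n - (i + 1))).map (fun j => elemL n j (b j))).prod)
    (fun i b => ∀ j < n - (i + 1), 0 < b j) (n - 1)
    (fun i _ b hb R hR => exists_commute_prod (fun j a => elemL n j a) (fun _ a => 0 < a)
      (n - (i + 1)) (fun j hj a ha R hR => exists_commute_elemL (by omega) ha hR) b hb R hR)
    (fun i j => u (j + 1) (i + 1 + j))
    (fun i hi j hj => hu _ _ (by omega) (by omega) (by omega)) R hR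
  -- The factor with 0-based position `j` in `T_{i+1}` carries the array entry `(j+1, i+1+j)`,
  -- so the entry `(p, q)` sits at `i = q - p`, `j = p - 1`.
  refine ⟨fun p q => d (q - p) (p - 1), R', ?_, hR', ?_⟩
  · intro p q h1 h2 h3
    exact hd (q - p) (by omega) (p - 1) (by omega)
  · have e : ∀ i j : ℕ, i + 1 + j - (j + 1) = i := fun i j => by omega
    simpa [Lmat, Tmat, e] using h

/-- Lower triangular with ones on the diagonal. -/
def IsLowerUnip {n : ℕ} (L : Matrix (Fin n) (Fin n) ℝ) : Prop :=
  (∀ p q, p < q → L p q = 0) ∧ ∀ p, L p p = 1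

lemma isLowerUnip_one {n : ℕ} : IsLowerUnip (1 : Matrix (Fin n) (Fin n) ℝ) :=
  ⟨fun _ _ h => Matrix.one_apply_ne h.ne, fun _ => Matrix.one_apply_eq _⟩

lemma IsLowerUnip.mul {n : ℕ} {L M : Matrix (Fin n) (Fin n) ℝ} (hL : IsLowerUnip L)
    (hM : IsLowerUnip M) : IsLowerUnip (L * M) := by
  refine ⟨fun p q h => ?_, fun p => ?_⟩
  · rw [Matrix.mul_apply]
    refine Finset.sum_eq_zero fun j _ => ?_
    rcases lt_or_ge p j with h1 | h1
    · simp [hL.1 p j h1]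
    · simp [hM.1 j q (h1.trans_lt h)]
  · rw [Matrix.mul_apply, Finset.sum_eq_single p]
    · simp [hL.2, hM.2]
    · intro j _ hj
      rcases lt_or_gt_of_ne hj with h1 | h1
      · simp [hM.1 j p h1]
      · simp [hL.1 p j h1]
    · simp

lemma isLowerUnip_list_prod {n : ℕ} (l : List (Matrix (Fin n) (Fin n) ℝ))
    (h : ∀ M ∈ l, IsLowerUnip M) : IsLowerUnip l.prod := by
  induction l with
  | nil => exact isLowerUnip_one
  | cons M l ih =>
    rw [List.prod_cons]
    exact (h M (by simp)).mul (ih fun N hN => h N (by simp [hN]))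

lemma isLowerUnip_elemL (n k : ℕ) (a : ℝ) : IsLowerUnip (elemL n k a) := by
  refine ⟨fun p q h => ?_, fun p => ?_⟩
  · have h1 : p ≠ q := h.ne
    have h2 : ¬((p : ℕ) = k + 1 ∧ (q : ℕ) = k) := by
      have : (p : ℕ) < q := h
      omega
    simp [elemL, h1, h2]
  · have h2 : ¬((p : ℕ) = k + 1 ∧ (p : ℕ) = k) := by omega
    simp only [elemL, if_neg h2]
    simp

lemma isLowerUnip_Lmat (n : ℕ) (u : ℕ → ℕ → ℝ) : IsLowerUnip (Lmat n u) := by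
  refine isLowerUnip_list_prod _ fun M hM => ?_
  obtain ⟨i, -, rfl⟩ := List.mem_map.1 hM
  refine isLowerUnip_list_prod _ fun N hN => ?_
  obtain ⟨j, -, rfl⟩ := List.mem_map.1 hN
  exact isLowerUnip_elemL _ _ _

lemma leadMinor_pos {n : ℕ} {L R : Matrix (Fin n) (Fin n) ℝ} (hL : IsLowerUnip L)
    (hR : IsBpos R) {k : ℕ} (hk : k ≤ n) : 0 < leadMinor (L * R) k := by
  -- Lower triangularity of `L` makes the leading block of the product the product of the blocks.
  have hblock : (L * R).submatrix (Fin.castLE hk) (Fin.castLE hk) =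
      L.submatrix (Fin.castLE hk) (Fin.castLE hk) *
        R.submatrix (Fin.castLE hk) (Fin.castLE hk) := by
    ext p q
    simp only [Matrix.submatrix_apply, Matrix.mul_apply]
    symm
    refine Finset.sum_of_injOn (Fin.castLE hk) (Fin.castLE_injective hk).injOn (by simp) ?_
      (fun _ _ => rfl)
    intro j _ hj
    have : Fin.castLE hk p < j := by
      by_contra hlt
      have hle : (j : ℕ) ≤ p := not_lt.1 hlt
      exact hj ⟨⟨j, by omega⟩, by simp, rfl⟩
    simp [hL.1 _ _ this]
  have hdL : (L.submatrix (Fin.castLE hk) (Fin.castLE hk)).det = 1 := by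
    rw [Matrix.det_of_isLowerTriangular]
    · simp [hL.2]
    · intro p q h
      exact hL.1 _ _ h
  have hdR : 0 < (R.submatrix (Fin.castLE hk) (Fin.castLE hk)).det := by
    rw [Matrix.det_of_isUpperTriangular]
    · exact Finset.prod_pos fun i _ => hR.2 _
    · intro p q h
      have h' : (q : ℕ) < p := h
      exact hR.1.2 _ _ (by simp; omega) (by simp; omega)
  rw [leadMinor, dif_pos hk, hblock, Matrix.det_mul, hdL, one_mul]
  exact hdR

/-- the discrete full Kostant–Toda map `X = L·R ↦ R·L` is defined on all
of `𝓗^{>0}` and maps it into itself; all forward iterates exist and stay in `𝓗^{>0}`. -/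
theorem statement9 (n : ℕ) (hn : 2 ≤ n) :
    -- every `X ∈ 𝓗^{>0}` has positive leading principal minors
    (∀ X ∈ Hpos n, ∀ k, 1 ≤ k → k ≤ n → 0 < leadMinor X k) ∧
    -- the map `X = L·R ↦ R·L` sends `𝓗^{>0}` into itself
    (∀ X ∈ Hpos n, ∀ (u : ℕ → ℕ → ℝ) (R : Matrix (Fin n) (Fin n) ℝ),
      PosTriangle n u → IsBpos R → X = Lmat n u * R → R * Lmat n u ∈ Hpos n) ∧
    -- all forward iterates are defined and lie in `𝓗^{>0}`
    (∀ X₀ ∈ Hpos n, ∃ Y : ℕ → Matrix (Fin n) (Fin n) ℝ, Y 0 = X₀ ∧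
      ∀ t : ℕ, Y t ∈ Hpos n ∧
        ∃ (u : ℕ → ℕ → ℝ) (R : Matrix (Fin n) (Fin n) ℝ),
          PosTriangle n u ∧ IsBpos R ∧ Y t = Lmat n u * R ∧ Y (t + 1) = R * Lmat n u) := by
  have hmap : ∀ (u : ℕ → ℕ → ℝ) (R : Matrix (Fin n) (Fin n) ℝ),
      PosTriangle n u → IsBpos R → R * Lmat n u ∈ Hpos n := fun u R hu hR => by
    obtain ⟨v, R', hv, hR', h⟩ := exists_commute_Lmat hu hR
    exact ⟨v, R', hv, hR', h⟩
  refine ⟨?_, fun _ _ u R hu hR _ => hmap u R hu hR, fun X₀ hX₀ => ?_⟩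
  · rintro X ⟨u, R, hu, hR, rfl⟩ k - hk
    exact leadMinor_pos (isLowerUnip_Lmat n u) hR hk
  · choose u R hu hR hX using fun X : Hpos n => X.2
    let step : Hpos n → Hpos n := fun X => ⟨R X * Lmat n (u X), hmap _ _ (hu X) (hR X)⟩
    refine ⟨fun t => (step^[t] ⟨X₀, hX₀⟩ : Hpos n), rfl, fun t => ⟨Subtype.property _, ?_⟩⟩
    refine ⟨u _, R _, hu _, hR _, hX (step^[t] ⟨X₀, hX₀⟩), ?_⟩
    simp only [Function.iterate_succ_apply', step]
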